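/- arXiv:2603.03068 — 5 statements merged into one kernel-verified Lean document; each statement's English description precedes it below -/
import Mathlib

section
/- Let C be an SRM with finite state set Q, initial state q₀, input space S, transition relation δ, finite guard set Ψ, and output function σ, satisfying strong determinism (any two distinct transitions out of the same state have jointly unsatisfiable guards) and completeness (every state has, for every input, some fulfilled outgoing guard). Let s₀, s₁, …, sₙ be any state sequence over S, let u₀ = q₀, u₁, …, uₙ be the (unique) run of C on it, and let r₁, …, rₙ be the SRM output sequence, rₜ = σ(u_{t-1}, φₜ) for the transition (u_{t-1}, φₜ, uₜ) ∈ δ taken at step t. Define the cross-product Markovian reward R₂((s,p), (s',q)) := Σ_{φ ∈ Ψ} [s' ⊨ φ] · σ(p, φ). Then for every t with 1 ≤ t ≤ n, R₂((s_{t-1}, u_{t-1}), (sₜ, uₜ)) = rₜ; i.e., the Markovian rewards along the lifted trajectory in the cross-product MDP coincide with the SRM output sequence C(τ). -/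
open scoped Classical

/-- Along the (unique) run of a strongly deterministic, complete SRM on
a state sequence, the cross-product Markovian reward
`R₂((s,p), (s',q)) = Σ_{φ ∈ Ψ} [s' ⊨ φ] · σ(p, φ)` coincides at every step `t` with
the SRM output `rₜ = σ(u_{t-1}, φₜ)`.  (Since `σ` is a partial output function
defined only on transitions, it is taken to be `0` on pairs `(p, φ)` that are not
used by any transition.) -/
theorem cross_product_rewards_match_srm_outputs {S Q : Type*} [Fintype Q]
    (Ψ : Finset (S → Prop)) (δ : Set (Q × (S → Prop) × Q))
    (σ : Q → (S → Prop) → ℝ) (q₀ : Q)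
    (hδΨ : ∀ (p : Q) (φ : S → Prop) (q : Q), (p, φ, q) ∈ δ → φ ∈ Ψ)
    (hdet : ∀ (p : Q) (φ₁ : S → Prop) (q₁ : Q) (φ₂ : S → Prop) (q₂ : Q),
      (p, φ₁, q₁) ∈ δ → (p, φ₂, q₂) ∈ δ → (φ₁, q₁) ≠ (φ₂, q₂) →
      ¬ ∃ s : S, φ₁ s ∧ φ₂ s)
    (hcomp : ∀ (p : Q) (s : S), ∃ (φ : S → Prop) (q : Q), (p, φ, q) ∈ δ ∧ φ s)
    (hσpartial : ∀ (p : Q) (φ : S → Prop), (¬ ∃ q : Q, (p, φ, q) ∈ δ) → σ p φ = 0)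
    (n : ℕ) (s : ℕ → S) (u : ℕ → Q) (φseq : ℕ → S → Prop)
    (h0 : u 0 = q₀)
    (hrun : ∀ t : ℕ, 1 ≤ t → t ≤ n →
      (u (t - 1), φseq t, u t) ∈ δ ∧ φseq t (s t)) :
    ∀ t : ℕ, 1 ≤ t → t ≤ n →
      ∑ φ ∈ Ψ, (if φ (s t) then (1 : ℝ) else 0) * σ (u (t - 1)) φ =
        σ (u (t - 1)) (φseq t) := by
  intro t h1 hn
  obtain ⟨hmem, hsat⟩ := hrun t h1 hn
  rw [Finset.sum_eq_single_of_mem (φseq t) (hδΨ _ _ _ hmem), if_pos hsat, one_mul]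
  intro φ _ hne
  by_cases hφ : φ (s t)
  · -- A satisfied guard other than `φseq t` labels no transition out of `u (t - 1)`,
    -- by strong determinism, so `σ` vanishes there by convention.
    rw [hσpartial _ _ fun ⟨q, hq⟩ => hdet _ _ _ _ _ hq hmem
      (fun h => hne (congrArg Prod.fst h)) ⟨s t, hφ, hsat⟩, mul_zero]
  · rw [if_neg hφ, zero_mul]
end

section
/- (Soundness of the LSRM-GF encoding.) Let S be a type, Q a finite set of SRM states with distinguished element q₀, Ψ a finite set of predicates on S, and E a finite set of counterexamples, each e ∈ E consisting of a state sequence s_{e,0}, …, s_{e,n_e} over S and a reward sequence r_{e,1}, …, r_{e,n_e} over ℝ. Suppose there is an assignment of Boolean variables d : Q × Ψ × Q → Bool and x : E × ℕ × Q → Bool and real variables o : Q × Ψ → ℝ satisfying: (φ_det) for all distinct triples (p,φ₁,q₁) ≠ (p,φ₂,q₂), if d(p,φ₁,q₁) and d(p,φ₂,q₂) then no s ∈ S fulfills both φ₁ and φ₂; (φ_state) for each e ∈ E, x(e,0,q₀) holds, and for each timestep t ≤ n_e exactly one p ∈ Q has x(e,t,p); (φ_trans) for each e ∈ E, t < n_e,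 p, q ∈ Q, φ ∈ Ψ: if x(e,t,p), d(p,φ,q), and s_{e,t+1} ⊨ φ, then x(e,t+1,q) and o(p,φ) = r_{e,t+1}; (φ_used) for each e ∈ E and t < n_e there exist p, q ∈ Q and φ ∈ Ψ with x(e,t,p), d(p,φ,q), and s_{e,t+1} ⊨ φ. Then the SRM C with state set Q, initial state q₀, transition relation δ = {(p,φ,q) : d(p,φ,q) = true}, and output function σ(p,φ) = o(p,φ) is deterministic and is consistent with every counterexample e ∈ E: there is a run u₀ = q₀, u₁, …, u_{n_e} of C on s_{e,0}, …, s_{e,n_e} whose output reward at each step t equals r_{e,t}. -/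
/-!
Determinism of the constructed machine is literally the constraint `φ_det`. For consistency, the
run is read off from `x`: `u t` is the unique state with `x e t (u t)`, so `u 0 = q₀`. At each step
`φ_used` provides some enabled transition `p → q`; uniqueness forces `p = u t`, and since `φ_trans`
gives `x e (t + 1) q` together with the correct output, uniqueness also forces `q = u (t + 1)`.
-/

/-- Soundness of the LSRM-GF encoding: From a satisfying assignment of
the Boolean variables `d` (transitions), `x` (run states) and real variables `o`
(outputs) for the constraints `φ_det`, `φ_state`, `φ_trans`, `φ_used`, the SRM with
transition relation `δ = {(p,φ,q) : φ ∈ Ψ ∧ d(p,φ,q) = true}` and output function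
`σ(p,φ) = o(p,φ)` is deterministic and is consistent with every counterexample:
on each counterexample's state sequence there is a run starting in `q₀` whose output
at every step `t` equals the observed reward `r_{e,t}`. -/
theorem lsrm_gf_encoding_sound {S Q E : Type*} [Fintype Q] [Fintype E] (q₀ : Q)
    (Ψ : Finset (S → Prop))
    (nE : E → ℕ) (sE : E → ℕ → S) (rE : E → ℕ → ℝ)
    (d : Q → (S → Prop) → Q → Bool) (x : E → ℕ → Q → Bool)
    (o : Q → (S → Prop) → ℝ)
    (hdet : ∀ (p : Q) (φ₁ : S → Prop) (q₁ : Q) (φ₂ : S → Prop) (q₂ : Q),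
      φ₁ ∈ Ψ → φ₂ ∈ Ψ → (φ₁, q₁) ≠ (φ₂, q₂) →
      d p φ₁ q₁ = true → d p φ₂ q₂ = true → ¬ ∃ s : S, φ₁ s ∧ φ₂ s)
    (hstate : ∀ e : E, x e 0 q₀ = true ∧ ∀ t ≤ nE e, ∃! p : Q, x e t p = true)
    (htrans : ∀ (e : E) (t : ℕ), t < nE e → ∀ (p q : Q) (φ : S → Prop), φ ∈ Ψ →
      x e t p = true → d p φ q = true → φ (sE e (t + 1)) →
      x e (t + 1) q = true ∧ o p φ = rE e (t + 1))
    (hused : ∀ (e : E) (t : ℕ), t < nE e → ∃ (p q : Q), ∃ φ ∈ Ψ,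
      x e t p = true ∧ d p φ q = true ∧ φ (sE e (t + 1))) :
    -- the constructed SRM is deterministic
    (∀ (p : Q) (φ₁ : S → Prop) (q₁ : Q) (φ₂ : S → Prop) (q₂ : Q),
        (φ₁ ∈ Ψ ∧ d p φ₁ q₁ = true) → (φ₂ ∈ Ψ ∧ d p φ₂ q₂ = true) →
        (φ₁, q₁) ≠ (φ₂, q₂) → ¬ ∃ s : S, φ₁ s ∧ φ₂ s) ∧
    -- the constructed SRM is consistent with every counterexample
    (∀ e : E, ∃ (u : ℕ → Q) (φseq : ℕ → S → Prop), u 0 = q₀ ∧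
      ∀ t : ℕ, 1 ≤ t → t ≤ nE e →
        (φseq t ∈ Ψ ∧ d (u (t - 1)) (φseq t) (u t) = true) ∧
        φseq t (sE e t) ∧ o (u (t - 1)) (φseq t) = rE e t) := by
  refine ⟨fun p φ₁ q₁ φ₂ q₂ h₁ h₂ hne => hdet p φ₁ q₁ φ₂ q₂ h₁.1 h₂.1 hne h₁.2 h₂.2, fun e => ?_⟩
  obtain ⟨hx₀, hx⟩ := hstate e
  -- Beyond the horizon `nE e` the run is unconstrained, so `q₀` serves as a default value.
  have hrun : ∀ t, ∃ p, t ≤ nE e → x e t p = true := fun t => by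
    by_cases ht : t ≤ nE e
    · obtain ⟨p, hp, -⟩ := hx t ht
      exact ⟨p, fun _ => hp⟩
    · exact ⟨q₀, fun h => absurd h ht⟩
  choose u hu using hrun
  have hguard : ∀ t, ∃ φ : S → Prop, 1 ≤ t → t ≤ nE e →
      (φ ∈ Ψ ∧ d (u (t - 1)) φ (u t) = true) ∧ φ (sE e t) ∧ o (u (t - 1)) φ = rE e t := by
    rintro (_ | t)
    · exact ⟨fun _ => True, fun h => absurd h (by omega)⟩
    by_cases ht : t + 1 ≤ nE e
    · obtain ⟨p, q, φ, hφ, hxp, hd, hs⟩ := hused e t ht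
      obtain ⟨hxq, ho⟩ := htrans e t ht p q φ hφ hxp hd hs
      obtain rfl : p = u t := (hx t (by omega)).unique hxp (hu t (by omega))
      obtain rfl : q = u (t + 1) := (hx (t + 1) ht).unique hxq (hu (t + 1) ht)
      exact ⟨φ, fun _ _ => ⟨⟨hφ, hd⟩, hs, ho⟩⟩
    · exact ⟨fun _ => True, fun _ h => absurd h ht⟩
  choose φseq hφseq using hguard
  exact ⟨u, φseq, (hx 0 (Nat.zero_le _)).unique (hu 0 (Nat.zero_le _)) hx₀, hφseq⟩
end

section
/- (Completeness of the LSRM-GF encoding.) Let S be a type, Ψ a finite set of predicates on S, and E a finite set of counterexamples, each e ∈ E consisting of a state sequence s_{e,0}, …, s_{e,n_e} over S and a reward sequence r_{e,1}, …, r_{e,n_e} over ℝ. Suppose there exists a deterministic SRM C with finite state set Q, initial state q₀, transition relation δ ⊆ Q × Ψ × Q, and output function σ, that is consistent with every counterexample in E. Then there exists an assignment of Boolean variables d : Q × Ψ × Q → Bool, x : E × ℕ × Q → Bool, and real variables o : Q × Ψ → ℝ satisfying all four constraints φ_det, φ_state, φ_trans, and φ_used (as defined in the LSRM-GF encoding);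 namely, setting d(p,φ,q) true iff (p,φ,q) ∈ δ, setting x(e,t,p) true iff the run of C on counterexample e is in state p at timestep t, and setting o(p,φ) = σ(p,φ) on used transitions yields a model of φ_SRM = φ_det ∧ φ_state ∧ φ_trans ∧ φ_used. -/
/-!
The model is read off from the given machine and its runs. The only constraint with content is
`φ_trans`: a transition of `δ` enabled at a run's current state on the next input must, by
determinism, be the one the run itself takes, so it has the run's successor state and reward.
-/

/-- Completeness of the LSRM-GF encoding: If there exists a
deterministic SRM (states `Q`, initial state `q₀`, transitions `δ ⊆ Q × Ψ × Q`,
output function `σ`) consistent with every counterexample in `E`, then there is an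
assignment of the Boolean variables `d`, `x` and real variables `o` satisfying all
four LSRM-GF constraints `φ_det`, `φ_state`, `φ_trans`, `φ_used`. -/
theorem lsrm_gf_encoding_complete {S Q E : Type*} [Fintype Q] [Fintype E] (q₀ : Q)
    (Ψ : Finset (S → Prop))
    (δ : Set (Q × (S → Prop) × Q)) (σ : Q → (S → Prop) → ℝ)
    (nE : E → ℕ) (sE : E → ℕ → S) (rE : E → ℕ → ℝ)
    (hδΨ : ∀ (p : Q) (φ : S → Prop) (q : Q), (p, φ, q) ∈ δ → φ ∈ Ψ)
    (hdet : ∀ (p : Q) (φ₁ : S → Prop) (q₁ : Q) (φ₂ : S → Prop) (q₂ : Q),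
      (p, φ₁, q₁) ∈ δ → (p, φ₂, q₂) ∈ δ → (φ₁, q₁) ≠ (φ₂, q₂) →
      ¬ ∃ s : S, φ₁ s ∧ φ₂ s)
    (hcons : ∀ e : E, ∃ (u : ℕ → Q) (φseq : ℕ → S → Prop), u 0 = q₀ ∧
      ∀ t : ℕ, 1 ≤ t → t ≤ nE e →
        (u (t - 1), φseq t, u t) ∈ δ ∧ φseq t (sE e t) ∧
        σ (u (t - 1)) (φseq t) = rE e t) :
    ∃ (d : Q → (S → Prop) → Q → Bool) (x : E → ℕ → Q → Bool)
      (o : Q → (S → Prop) → ℝ),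
      -- φ_det
      (∀ (p : Q) (φ₁ : S → Prop) (q₁ : Q) (φ₂ : S → Prop) (q₂ : Q),
        φ₁ ∈ Ψ → φ₂ ∈ Ψ → (φ₁, q₁) ≠ (φ₂, q₂) →
        d p φ₁ q₁ = true → d p φ₂ q₂ = true → ¬ ∃ s : S, φ₁ s ∧ φ₂ s) ∧
      -- φ_state
      (∀ e : E, x e 0 q₀ = true ∧ ∀ t ≤ nE e, ∃! p : Q, x e t p = true) ∧
      -- φ_trans
      (∀ (e : E) (t : ℕ), t < nE e → ∀ (p q : Q) (φ : S → Prop), φ ∈ Ψ →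
        x e t p = true → d p φ q = true → φ (sE e (t + 1)) →
        x e (t + 1) q = true ∧ o p φ = rE e (t + 1)) ∧
      -- φ_used
      (∀ (e : E) (t : ℕ), t < nE e → ∃ (p q : Q), ∃ φ ∈ Ψ,
        x e t p = true ∧ d p φ q = true ∧ φ (sE e (t + 1))) := by
  classical
  choose u g hu0 hu using hcons
  -- the intended model: `d` is membership in `δ`, `x e t` singles out the `t`-th state of the
  -- run on `e`, and `o` is `σ`
  refine ⟨fun p φ q => decide ((p, φ, q) ∈ δ), fun e t p => decide (u e t = p), σ,
    ?_, ?_, ?_, ?_⟩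
  · intro p φ₁ q₁ φ₂ q₂ _ _ hne h₁ h₂
    exact hdet p φ₁ q₁ φ₂ q₂ (of_decide_eq_true h₁) (of_decide_eq_true h₂) hne
  · intro e
    exact ⟨decide_eq_true (hu0 e), fun t _ =>
      ⟨u e t, decide_eq_true rfl, fun p hp => (of_decide_eq_true hp).symm⟩⟩
  · intro e t ht p q φ _ hx hd hφ
    obtain rfl : u e t = p := of_decide_eq_true hx
    have hd' : (u e t, φ, q) ∈ δ := of_decide_eq_true hd
    obtain ⟨hδ, hg, hσ⟩ := hu e (t + 1) (Nat.succ_pos t) ht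
    rw [Nat.add_sub_cancel] at hδ hσ
    -- both guards hold at `sE e (t + 1)`, so determinism identifies the two transitions
    have heq : (g e (t + 1), u e (t + 1)) = (φ, q) := by
      by_contra hne
      exact hdet _ _ _ _ _ hδ hd' hne ⟨_, hg, hφ⟩
    obtain ⟨rfl, rfl⟩ := Prod.mk.inj heq
    exact ⟨decide_eq_true rfl, hσ⟩
  · intro e t ht
    obtain ⟨hδ, hg, -⟩ := hu e (t + 1) (Nat.succ_pos t) ht
    rw [Nat.add_sub_cancel] at hδ
    exact ⟨u e t, u e (t + 1), g e (t + 1), hδΨ _ _ _ hδ, decide_eq_true rfl,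
      decide_eq_true hδ, hg⟩
end

section
/- (Determinism of LSRM-FT SRMs by construction.) Let S be a type and Q a finite set of SRM states. For each state p ∈ Q let ψ^p_0, …, ψ^p_{f-1} be predicates on S, and define the guards φ^p_i := ψ^p_i ∧ ⋀_{j ≠ i} ¬ψ^p_j. Let d assign to each triple (p, i, q) with p, q ∈ Q and i < f a Boolean indicating whether the transition (p, φ^p_i, q) exists, and suppose d satisfies the rewritten determinism constraint: for all p ∈ Q, all i < f, and all q₁ ≠ q₂ in Q, not both d(p, i, q₁) and d(p, i, q₂). Then the SRM whose transition relation is δ = {(p, φ^p_i, q) : d(p,i,q) = true} is deterministic: for any two transitions (p, φ, q), (p, φ', q') ∈ δ with q ≠ q', no s ∈ S fulfills both φ and φ'. -/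
/-- Determinism of LSRM-FT SRMs by construction: With guards
`φ^p_i := ψ^p_i ∧ ⋀_{j ≠ i} ¬ψ^p_j` and the rewritten determinism constraint
(the same guard index is never used on two outgoing transitions with different
targets), the SRM with transition relation
`δ = {(p, φ^p_i, q) : d(p,i,q) = true}` is deterministic. -/
theorem lsrm_ft_deterministic_by_construction {S Q : Type*} [Fintype Q] {f : ℕ}
    (ψ : Q → Fin f → S → Prop) (φ : Q → Fin f → S → Prop)
    (hφ : ∀ (p : Q) (i : Fin f) (s : S),
      φ p i s ↔ (ψ p i s ∧ ∀ j : Fin f, j ≠ i → ¬ ψ p j s))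
    (d : Q → Fin f → Q → Bool)
    (hdet : ∀ (p : Q) (i : Fin f) (q₁ q₂ : Q), q₁ ≠ q₂ →
      ¬ (d p i q₁ = true ∧ d p i q₂ = true))
    (δ : Set (Q × (S → Prop) × Q))
    (hδ : ∀ (p : Q) (g : S → Prop) (q : Q),
      (p, g, q) ∈ δ ↔ ∃ i : Fin f, g = φ p i ∧ d p i q = true) :
    ∀ (p : Q) (g : S → Prop) (q : Q) (g' : S → Prop) (q' : Q),
      (p, g, q) ∈ δ → (p, g', q') ∈ δ → q ≠ q' → ¬ ∃ s : S, g s ∧ g' s := by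
  rintro p g q g' q' hg hg' hq ⟨s, hs, hs'⟩
  obtain ⟨i, rfl, hi⟩ := (hδ p g q).1 hg
  obtain ⟨j, rfl, hj⟩ := (hδ p g' q').1 hg'
  obtain rfl : i = j := by
    -- The guard `φ p j` makes `j` the only template index true at `s`.
    by_contra hij
    exact ((hφ p j s).1 hs').2 i hij ((hφ p i s).1 hs).1
  exact hdet p i q q' hq ⟨hi, hj⟩
end

section
/- Let S be a type, X a finite set of predicates on S that are pairwise jointly unsatisfiable (the guards of the outgoing transitions of a deterministic SRM state p), and φ_out := ¬⋁_{φ ∈ X} φ. Suppose E is a set of counterexamples such that the SRM's run on every counterexample, whenever it is in state p at timestep t, takes a transition whose guard φ ∈ X is fulfilled by the next observed state. Then extending the SRM by the self-loop (p, φ_out, p) with output 0 does not change the run or the output reward sequence of the SRM on any counterexample in E; i.e., the extended SRM is consistent with exactly the same counterexamples, and in addition state p is complete. -/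
open scoped Classical

/-!
The new self-loop is never taken on a counterexample. By strong induction on the timestep, a run
of the extended machine has used only original transitions so far; if it now took the self-loop,
it would be in `p`, where by hypothesis the next observed state fulfills a guard in `X`, contrary
to `φout`. The outputs agree because an original transition out of `p` has its guard in `X`, so
when it is fulfilled it cannot be guarded by `φout`, even if `φout ∈ X`. Completeness of `p` is
excluded middle.
-/

/-- Let `X` be the (finite, pairwise jointly unsatisfiable) set of
guards of the outgoing transitions of a deterministic SRM state `p`, and let
`φ_out := ¬⋁_{φ ∈ X} φ`.  Assume that on every counterexample, whenever a run of the
SRM reaches `p` at some timestep, the next observed state fulfills some guard in `X`.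
Then extending the SRM by the self-loop `(p, φ_out, p)` with output `0` changes
neither the runs nor the output reward sequences on the counterexamples: the runs of
the extended SRM coincide with the runs of the original SRM, outputs are unchanged,
the extended SRM is consistent with exactly the same counterexamples, and in
addition the state `p` is complete in the extended SRM. -/
theorem lsrm_self_loop_extension {S Q E : Type*}
    (δ : Set (Q × (S → Prop) × Q)) (σ : Q → (S → Prop) → ℝ) (q₀ p : Q)
    (X : Set (S → Prop)) (hXfin : X.Finite)
    (hX : X = {φ : S → Prop | ∃ q : Q, (p, φ, q) ∈ δ})
    (hXdet : ∀ φ₁ ∈ X, ∀ φ₂ ∈ X, φ₁ ≠ φ₂ → ¬ ∃ s : S, φ₁ s ∧ φ₂ s)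
    (φout : S → Prop) (hout : ∀ s : S, φout s ↔ ∀ φ ∈ X, ¬ φ s)
    (nE : E → ℕ) (sE : E → ℕ → S) (rE : E → ℕ → ℝ)
    -- whenever a (prefix of a) run of the original SRM on a counterexample is in
    -- state `p` at timestep `m - 1`, the next observed state fulfills a guard in `X`
    (hruns : ∀ (e : E) (m : ℕ), 1 ≤ m → m ≤ nE e →
      ∀ (u : ℕ → Q) (φseq : ℕ → S → Prop), u 0 = q₀ →
        (∀ t : ℕ, 1 ≤ t → t ≤ m - 1 → (u (t - 1), φseq t, u t) ∈ δ ∧ φseq t (sE e t)) →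
        u (m - 1) = p → ∃ φ ∈ X, φ (sE e m))
    (δ' : Set (Q × (S → Prop) × Q)) (hδ' : δ' = δ ∪ {(p, φout, p)})
    (σ' : Q → (S → Prop) → ℝ)
    (hσ' : ∀ (q : Q) (φ : S → Prop),
      σ' q φ = if q = p ∧ φ = φout then 0 else σ q φ) :
    -- (1) the runs on the counterexamples are unchanged
    (∀ (e : E) (u : ℕ → Q) (φseq : ℕ → S → Prop),
      (u 0 = q₀ ∧ ∀ t : ℕ, 1 ≤ t → t ≤ nE e →
        (u (t - 1), φseq t, u t) ∈ δ' ∧ φseq t (sE e t)) ↔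
      (u 0 = q₀ ∧ ∀ t : ℕ, 1 ≤ t → t ≤ nE e →
        (u (t - 1), φseq t, u t) ∈ δ ∧ φseq t (sE e t))) ∧
    -- (2) the output reward sequence of any such run is unchanged
    (∀ (e : E) (u : ℕ → Q) (φseq : ℕ → S → Prop),
      (u 0 = q₀ ∧ ∀ t : ℕ, 1 ≤ t → t ≤ nE e →
        (u (t - 1), φseq t, u t) ∈ δ ∧ φseq t (sE e t)) →
      ∀ t : ℕ, 1 ≤ t → t ≤ nE e →
        σ' (u (t - 1)) (φseq t) = σ (u (t - 1)) (φseq t)) ∧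
    -- (3) the extended SRM is consistent with exactly the same counterexamples
    (∀ e : E,
      (∃ (u : ℕ → Q) (φseq : ℕ → S → Prop), u 0 = q₀ ∧
        ∀ t : ℕ, 1 ≤ t → t ≤ nE e →
          (u (t - 1), φseq t, u t) ∈ δ' ∧ φseq t (sE e t) ∧
          σ' (u (t - 1)) (φseq t) = rE e t) ↔
      (∃ (u : ℕ → Q) (φseq : ℕ → S → Prop), u 0 = q₀ ∧
        ∀ t : ℕ, 1 ≤ t → t ≤ nE e →
          (u (t - 1), φseq t, u t) ∈ δ ∧ φseq t (sE e t) ∧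
          σ (u (t - 1)) (φseq t) = rE e t)) ∧
    -- (4) state `p` is complete in the extended SRM
    (∀ s : S, ∃ (φ : S → Prop) (q : Q), (p, φ, q) ∈ δ' ∧ φ s) := by
  have runs : ∀ (e : E) (u : ℕ → Q) (φseq : ℕ → S → Prop), u 0 = q₀ →
      (∀ t : ℕ, 1 ≤ t → t ≤ nE e →
        (u (t - 1), φseq t, u t) ∈ δ' ∧ φseq t (sE e t)) →
      ∀ t : ℕ, 1 ≤ t → t ≤ nE e →
        (u (t - 1), φseq t, u t) ∈ δ ∧ φseq t (sE e t) := by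
    intro e u φseq h0 h t
    induction t using Nat.strong_induction_on with
    | _ t ih =>
      intro ht1 htn
      obtain ⟨hmem, hsat⟩ := h t ht1 htn
      refine ⟨?_, hsat⟩
      rw [hδ'] at hmem
      rcases hmem with hmem | hmem
      · exact hmem
      · simp only [Set.mem_singleton_iff, Prod.mk.injEq] at hmem
        obtain ⟨hp, hφ, -⟩ := hmem
        obtain ⟨φ, hφX, hφs⟩ := hruns e t ht1 htn u φseq h0
          (fun k hk1 hk => ih k (by omega) hk1 (by omega)) hp
        rw [hφ] at hsat
        exact absurd hφs ((hout _).1 hsat φ hφX)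
  have sub : ∀ x ∈ δ, x ∈ δ' := fun x hx => hδ' ▸ Or.inl hx
  have out : ∀ (q q' : Q) (φ : S → Prop) (s : S), (q, φ, q') ∈ δ → φ s → σ' q φ = σ q φ := by
    intro q q' φ s hmem hs
    rw [hσ', if_neg]
    rintro ⟨rfl, rfl⟩
    exact (hout s).1 hs φ (hX ▸ ⟨q', hmem⟩) hs
  refine ⟨?_, ?_, ?_, ?_⟩
  · intro e u φseq
    exact ⟨fun h => ⟨h.1, runs e u φseq h.1 h.2⟩,
      fun h => ⟨h.1, fun t h1 h2 => ⟨sub _ (h.2 t h1 h2).1, (h.2 t h1 h2).2⟩⟩⟩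
  · intro e u φseq h t h1 h2
    exact out _ _ _ _ (h.2 t h1 h2).1 (h.2 t h1 h2).2
  · intro e
    constructor
    · rintro ⟨u, φseq, h0, h⟩
      refine ⟨u, φseq, h0, fun t h1 h2 => ?_⟩
      obtain ⟨hm, hs⟩ := runs e u φseq h0
        (fun k k1 k2 => ⟨(h k k1 k2).1, (h k k1 k2).2.1⟩) t h1 h2
      exact ⟨hm, hs, (out _ _ _ _ hm hs).symm.trans (h t h1 h2).2.2⟩
    · rintro ⟨u, φseq, h0, h⟩
      refine ⟨u, φseq, h0, fun t h1 h2 => ?_⟩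
      obtain ⟨hm, hs, hr⟩ := h t h1 h2
      exact ⟨sub _ hm, hs, (out _ _ _ _ hm hs).trans hr⟩
  · intro s
    by_cases hs : φout s
    · exact ⟨φout, p, hδ' ▸ Or.inr rfl, hs⟩
    · rw [hout] at hs
      push Not at hs
      obtain ⟨φ, hφX, hφs⟩ := hs
      rw [hX] at hφX
      obtain ⟨q, hq⟩ := hφX
      exact ⟨φ, q, sub _ hq, hφs⟩
end
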